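/- For every Z ∈ L^∞_T there exists a unique (up to a.s. equality) positive martingale (M_s)_{s=t,…,T} ∈ 𝓜_t attaining the essential infimum essinf_{(M_s)∈𝓜_t} { Σ_{s=t}^T E[u_s^*(M_s) | 𝓕_t] + E[M_T Z | 𝓕_t] }. -/

import Mathlib

open MeasureTheory Filter

variable {Ω : Type*}

/-- `X ∈ L^∞(m)`: `m`-measurable and (essentially) bounded. -/
def MeasBdd (m : MeasurableSpace Ω) (X : Ω → ℝ) : Prop :=
  Measurable[m] X ∧ ∃ C : ℝ, ∀ ω, |X ω| ≤ C

/-- `u` is a utility function (strictly increasing, strictly concave, `C¹`) with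
derivative `u'` satisfying `u 0 = 0`, `u' 0 = 1`, `u'(+∞) = 0`, `u'(-∞) = +∞`. -/
structure IsUtility (u u' : ℝ → ℝ) : Prop where
  strictMono : StrictMono u
  strictConcave : StrictConcaveOn ℝ Set.univ u
  hasDeriv : ∀ x, HasDerivAt u (u' x) x
  derivCont : Continuous u'
  zero : u 0 = 0
  deriv_zero : u' 0 = 1
  deriv_top : Tendsto u' atTop (nhds 0)
  deriv_bot : Tendsto u' atBot atTop

/-- A one-product diversification of `Z` at time `t`: an adapted family `(X s)`,
`s = t,…,T`, of essentially bounded random variables summing to `Z`. -/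
def IsDiv1 {m0 : MeasurableSpace Ω} (P : Measure Ω) (ℱ : Filtration ℕ m0)
    (t T : ℕ) (Z : Ω → ℝ) (X : ℕ → Ω → ℝ) : Prop :=
  (∀ s ∈ Finset.Icc t T, MeasBdd (ℱ s) (X s)) ∧
  ∀ᵐ ω ∂P, (∑ s ∈ Finset.Icc t T, X s ω) = Z ω

/-- The total conditional expected utility `∑_{s=t}^T E[u_s(X_s) | 𝓕_t]`. -/
noncomputable def utilSum1 {m0 : MeasurableSpace Ω} (P : Measure Ω) (ℱ : Filtration ℕ m0)
    (u : ℕ → ℝ → ℝ) (t T : ℕ) (X : ℕ → Ω → ℝ) : Ω → ℝ :=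
  fun ω => ∑ s ∈ Finset.Icc t T, (P[fun ω' => u s (X s ω') | ℱ t]) ω

/-- The convex conjugate `u^*(y) = sup_{x ∈ ℝ} (u(x) - x y)` (finite for `y > 0`). -/
noncomputable def uStar (u : ℝ → ℝ) (y : ℝ) : ℝ :=
  sSup {z | ∃ x : ℝ, z = u x - x * y}

/-- `(M s)_{s=t,…,T}` is a positive integrable martingale w.r.t. `(ℱ s)`. -/
def IsPosMart {m0 : MeasurableSpace Ω} (P : Measure Ω) (ℱ : Filtration ℕ m0)
    (t T : ℕ) (M : ℕ → Ω → ℝ) : Prop :=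
  (∀ s ∈ Finset.Icc t T,
    Measurable[ℱ s] (M s) ∧ Integrable (M s) P ∧ ∀ᵐ ω ∂P, 0 < M s ω) ∧
  ∀ r ∈ Finset.Icc t T, ∀ s ∈ Finset.Icc t T, r ≤ s →
    (P[M s | ℱ r]) =ᵐ[P] M r

/-- The dual objective
`Ψ_t(M) = Σ_{s=t}^T E[u_s^*(M_s)|𝓕_t] + E[M_T Z|𝓕_t]`. -/
noncomputable def dualObj {m0 : MeasurableSpace Ω} (P : Measure Ω) (ℱ : Filtration ℕ m0)
    (u : ℕ → ℝ → ℝ) (t T : ℕ) (Z : Ω → ℝ) (M : ℕ → Ω → ℝ) : Ω → ℝ :=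
  fun ω => (∑ s ∈ Finset.Icc t T, (P[fun ω' => uStar (u s) (M s ω') | ℱ t]) ω) +
    (P[fun ω' => M T ω' * Z ω' | ℱ t]) ω

/-- finiteness of the conjugate at a point -/
def StarBdd (u : ℝ → ℝ) (y : ℝ) : Prop := BddAbove {z | ∃ x : ℝ, z = u x - x * y}

theorem le_uStar {u : ℝ → ℝ} {y : ℝ} (h : StarBdd u y) (x : ℝ) : u x - x * y ≤ uStar u y :=
  le_csSup h ⟨x, rfl⟩

theorem uStar_le {u : ℝ → ℝ} {y c : ℝ} (h : ∀ x, u x - x * y ≤ c) : uStar u y ≤ c :=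
  csSup_le ⟨_, 0, rfl⟩ (by rintro _ ⟨x, rfl⟩; exact h x)

theorem uStar_of_not_bdd {u : ℝ → ℝ} {y : ℝ} (h : ¬ StarBdd u y) : uStar u y = 0 :=
  Real.sSup_of_not_bddAbove h

theorem starBdd_of_le {u : ℝ → ℝ} {y c : ℝ} (h : ∀ x, u x - x * y ≤ c) : StarBdd u y :=
  ⟨c, by rintro _ ⟨x, rfl⟩; exact h x⟩

theorem IsUtility.tangent {u u' : ℝ → ℝ} (hu : IsUtility u u') (a x : ℝ) :
    u x ≤ u a + u' a * (x - a) := by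
  have hc : ConvexOn ℝ Set.univ (-u) := hu.strictConcave.concaveOn.neg
  have hd : HasDerivAt (-u) (-u' a) a := (hu.hasDeriv a).neg
  rcases lt_trichotomy a x with h | h | h
  · have := hc.le_slope_of_hasDerivAt (Set.mem_univ _) (Set.mem_univ _) h hd
    rw [slope_def_field, le_div_iff₀ (by linarith)] at this
    simp only [Pi.neg_apply] at this
    linarith
  · subst h; simp
  · have := hc.slope_le_of_hasDerivAt (Set.mem_univ _) (Set.mem_univ _) h hd
    rw [slope_def_field, div_le_iff₀ (by linarith)] at this
    simp only [Pi.neg_apply] at this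
    linarith

theorem IsUtility.bound {u u' : ℝ → ℝ} (hu : IsUtility u u') (a x : ℝ) :
    u x - x * u' a ≤ u a - a * u' a := by
  have := hu.tangent a x
  linarith

theorem IsUtility.uStar_deriv {u u' : ℝ → ℝ} (hu : IsUtility u u') (a : ℝ) :
    uStar u (u' a) = u a - a * u' a :=
  le_antisymm (uStar_le (hu.bound a)) (le_uStar (starBdd_of_le (hu.bound a)) a)

theorem IsUtility.exists_deriv {u u' : ℝ → ℝ} (hu : IsUtility u u') {y : ℝ} (hy : 0 < y) :
    ∃ a, u' a = y := by
  obtain ⟨b, hb⟩ := (hu.deriv_top.eventually (gt_mem_nhds hy)).exists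
  obtain ⟨c, hc⟩ := (hu.deriv_bot.eventually_ge_atTop y).exists
  obtain ⟨a, ha⟩ := mem_range_of_exists_le_of_exists_ge hu.derivCont ⟨b, hb.le⟩ ⟨c, hc⟩
  exact ⟨a, ha⟩

theorem IsUtility.starBdd {u u' : ℝ → ℝ} (hu : IsUtility u u') {y : ℝ} (hy : 0 < y) :
    StarBdd u y := by
  obtain ⟨a, rfl⟩ := hu.exists_deriv hy
  exact starBdd_of_le (hu.bound a)

theorem IsUtility.uStar_nonneg {u u' : ℝ → ℝ} (hu : IsUtility u u') (y : ℝ) :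
    0 ≤ uStar u y := by
  by_cases h : StarBdd u y
  · have := le_uStar h 0
    simpa [hu.zero] using this
  · rw [uStar_of_not_bdd h]

theorem IsUtility.uStar_one {u u' : ℝ → ℝ} (hu : IsUtility u u') : uStar u 1 = 0 := by
  have := hu.uStar_deriv 0
  simpa [hu.zero, hu.deriv_zero] using this

theorem uStar_conv_aux {u : ℝ → ℝ} {x y a b : ℝ} (hx : StarBdd u x) (hy : StarBdd u y)
    (ha : 0 ≤ a) (hb : 0 ≤ b) (hab : a + b = 1) (z : ℝ) :
    u z - z * (a * x + b * y) ≤ a * uStar u x + b * uStar u y := by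
  have h1 := mul_le_mul_of_nonneg_left (le_uStar hx z) ha
  have h2 := mul_le_mul_of_nonneg_left (le_uStar hy z) hb
  have h3 : u z = a * u z + b * u z := by rw [← add_mul, hab, one_mul]
  nlinarith

theorem uStar_conv {u : ℝ → ℝ} {x y a b : ℝ} (hx : StarBdd u x) (hy : StarBdd u y)
    (ha : 0 ≤ a) (hb : 0 ≤ b) (hab : a + b = 1) :
    uStar u (a * x + b * y) ≤ a * uStar u x + b * uStar u y :=
  uStar_le (uStar_conv_aux hx hy ha hb hab)

/-- midpoint defect -/
noncomputable def defect (u : ℝ → ℝ) (x y : ℝ) : ℝ :=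
  2⁻¹ * uStar u x + 2⁻¹ * uStar u y - uStar u (2⁻¹ * x + 2⁻¹ * y)

theorem IsUtility.defect_nonneg {u u' : ℝ → ℝ} (hu : IsUtility u u') {x y : ℝ}
    (hx : 0 < x) (hy : 0 < y) : 0 ≤ defect u x y := by
  have := uStar_conv (hu.starBdd hx) (hu.starBdd hy) (a := 2⁻¹) (b := 2⁻¹)
    (by norm_num) (by norm_num) (by norm_num)
  unfold defect; linarith

theorem IsUtility.defect_pos {u u' : ℝ → ℝ} (hu : IsUtility u u') {x y : ℝ}
    (hx : 0 < x) (hy : 0 < y) (hxy : x ≠ y) : 0 < defect u x y := by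
  obtain ⟨a, ha⟩ := hu.exists_deriv (y := 2⁻¹ * x + 2⁻¹ * y) (by positivity)
  have hm := hu.uStar_deriv a
  rw [ha] at hm
  have h2 := le_uStar (hu.starBdd hy) a
  have h1 : u a - a * x < uStar u x := by
    refine lt_of_le_of_ne (le_uStar (hu.starBdd hx) a) fun h => ?_
    have hmax : IsLocalMax (fun z => u z - z * x) a :=
      Filter.Eventually.of_forall fun z => by
        have := le_uStar (hu.starBdd hx) z
        simp only; linarith
    have hd : HasDerivAt (fun z => u z - z * x) (u' a - 1 * x) a :=
      (hu.hasDeriv a).sub ((hasDerivAt_id a).mul_const x)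
    have := hmax.hasDerivAt_eq_zero hd
    apply hxy; linarith
  unfold defect
  rw [hm]; linarith

theorem IsUtility.convexOn {u u' : ℝ → ℝ} (hu : IsUtility u u') :
    ConvexOn ℝ (Set.Ioi 0) (uStar u) :=
  ⟨convex_Ioi 0, fun _ hx _ hy _ _ ha hb hab =>
    uStar_conv (hu.starBdd hx) (hu.starBdd hy) ha hb hab⟩

theorem IsUtility.continuousOn {u u' : ℝ → ℝ} (hu : IsUtility u u') :
    ContinuousOn (uStar u) (Set.Ioi 0) :=
  hu.convexOn.continuousOn isOpen_Ioi

theorem IsUtility.defect_lower {u u' : ℝ → ℝ} (hu : IsUtility u u') {ε K : ℝ} (hε : 0 < ε)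
    : ∃ c > 0, ∀ x y, 0 < x → x + ε ≤ y → y ≤ K → c ≤ defect u x y := by
  by_cases hK : ε / 2 ≤ K
  swap
  · exact ⟨1, one_pos, fun x y hx hxy hy => by linarith⟩
  have hcont : ContinuousOn (fun m => defect u (m - ε / 4) (m + ε / 4)) (Set.Icc (ε / 2) K) := by
    unfold defect
    have h1 : ContinuousOn (fun m => uStar u (m - ε / 4)) (Set.Icc (ε / 2) K) :=
      hu.continuousOn.comp (by fun_prop) fun m hm => by
        simp only [Set.mem_Icc, Set.mem_Ioi] at *; linarith
    have h2 : ContinuousOn (fun m => uStar u (m + ε / 4)) (Set.Icc (ε / 2) K) :=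
      hu.continuousOn.comp (by fun_prop) fun m hm => by
        simp only [Set.mem_Icc, Set.mem_Ioi] at *; linarith
    have h3 : ContinuousOn (fun m => uStar u (2⁻¹ * (m - ε / 4) + 2⁻¹ * (m + ε / 4)))
        (Set.Icc (ε / 2) K) :=
      hu.continuousOn.comp (by fun_prop) fun m hm => by
        simp only [Set.mem_Icc, Set.mem_Ioi] at *; linarith
    exact ((h1.const_smul (2⁻¹ : ℝ)).add (h2.const_smul (2⁻¹ : ℝ))).sub h3
  obtain ⟨m0, hm0, hmin⟩ := isCompact_Icc.exists_isMinOn ⟨ε / 2, le_rfl, hK⟩ hcont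
  refine ⟨_, hu.defect_pos (x := m0 - ε / 4) (y := m0 + ε / 4) ?_ ?_ ?_, ?_⟩
  · linarith [hm0.1]
  · linarith [hm0.1]
  · intro h; linarith
  intro x y hx hxy hy
  have hm : 2⁻¹ * x + 2⁻¹ * y ∈ Set.Icc (ε / 2) K := ⟨by linarith, by linarith⟩
  refine (hmin hm).trans ?_
  simp only
  set m := 2⁻¹ * x + 2⁻¹ * y with hmdef
  have hd : 0 < y - x := by linarith
  set q := (ε / 4) / (y - x) with hq
  have hqd : q * (y - x) = ε / 4 := by rw [hq]; field_simp
  have hq0 : 0 < q := by positivity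
  have hq1 : q ≤ 2⁻¹ := by rw [hq, div_le_iff₀ hd]; linarith
  have e1 := uStar_conv (hu.starBdd hx) (hu.starBdd (by linarith : 0 < y)) (a := 2⁻¹ + q)
    (b := 2⁻¹ - q) (by linarith) (by linarith) (by ring)
  have e2 := uStar_conv (hu.starBdd hx) (hu.starBdd (by linarith : 0 < y)) (a := 2⁻¹ - q)
    (b := 2⁻¹ + q) (by linarith) (by linarith) (by ring)
  have f1 : (2⁻¹ + q) * x + (2⁻¹ - q) * y = m - ε / 4 := by rw [← hqd, hmdef]; ring
  have f2 : (2⁻¹ - q) * x + (2⁻¹ + q) * y = m + ε / 4 := by rw [← hqd, hmdef]; ring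
  rw [f1] at e1; rw [f2] at e2
  unfold defect
  have f3 : 2⁻¹ * (m - ε / 4) + 2⁻¹ * (m + ε / 4) = m := by ring
  rw [f3, ← hmdef]
  linarith

theorem defect_comm (u : ℝ → ℝ) (x y : ℝ) : defect u x y = defect u y x := by
  unfold defect; rw [add_comm (2⁻¹ * uStar u x), add_comm (2⁻¹ * x)]

theorem IsUtility.dist_le {u u' : ℝ → ℝ} (hu : IsUtility u u') {ε : ℝ} (hε : 0 < ε) :
    ∃ C, 0 ≤ C ∧ ∀ x y, 0 < x → 0 < y →
      |x - y| ≤ ε * (1 + uStar u x + uStar u y) + C * defect u x y := by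
  set K : ℝ := max 1 (-(ε * u (-(2 / ε)))) with hK
  have hK1 : 1 ≤ K := le_max_left _ _
  have hbig : ∀ y, K ≤ y → y ≤ ε * uStar u y := by
    intro y hy
    have h1 := le_uStar (hu.starBdd (by linarith : 0 < y)) (-(2 / ε))
    have h2 := mul_le_mul_of_nonneg_left h1 hε.le
    have h3 : ε * (u (-(2 / ε)) - -(2 / ε) * y) = ε * u (-(2 / ε)) + 2 * y := by
      field_simp
      ring
    have := le_max_right 1 (-(ε * u (-(2 / ε))))
    linarith
  obtain ⟨c, hc, hcd⟩ := hu.defect_lower (K := K) hε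
  have key : ∀ x y, 0 < x → 0 < y → x ≤ y →
      y - x ≤ ε * (1 + uStar u x + uStar u y) + K / c * defect u x y := by
    intro x y hx hy hxy
    have hfx := mul_nonneg hε.le (hu.uStar_nonneg x)
    have hfy := mul_nonneg hε.le (hu.uStar_nonneg y)
    have hd := mul_nonneg (by positivity : 0 ≤ K / c) (hu.defect_nonneg hx hy)
    by_cases h1 : K ≤ y
    · have := hbig y h1
      linarith
    by_cases h2 : x + ε ≤ y
    · have h3 := hcd x y hx h2 (by linarith)
      have h4 : K ≤ K / c * defect u x y := by
        calc K = K / c * c := by field_simp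
          _ ≤ _ := by gcongr
      linarith
    · linarith
  refine ⟨K / c, by positivity, fun x y hx hy => ?_⟩
  rcases le_total x y with h | h
  · rw [abs_sub_comm, abs_of_nonneg (by linarith)]
    exact key x y hx hy h
  · rw [abs_of_nonneg (by linarith), defect_comm]
    linarith [key y x hy hx h]

/-- extended conjugate -/
noncomputable def eStar (u : ℝ → ℝ) (y : ℝ) : ENNReal := ⨆ x, ENNReal.ofReal (u x - x * y)

theorem eStar_lsc (u : ℝ → ℝ) : LowerSemicontinuous (eStar u) :=
  lowerSemicontinuous_iSup fun x => (ENNReal.continuous_ofReal.comp (by fun_prop)).lowerSemicontinuous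

theorem eStar_eq {u : ℝ → ℝ} {y : ℝ} (h : StarBdd u y) :
    eStar u y = ENNReal.ofReal (uStar u y) := by
  apply le_antisymm
  · exact iSup_le fun x => ENNReal.ofReal_le_ofReal (le_uStar h x)
  · by_cases ht : eStar u y = ⊤
    · rw [ht]; exact le_top
    apply ENNReal.ofReal_le_of_le_toReal
    apply uStar_le
    intro x
    have : ENNReal.ofReal (u x - x * y) ≤ eStar u y :=
      le_iSup (fun x => ENNReal.ofReal (u x - x * y)) x
    exact (ENNReal.ofReal_le_iff_le_toReal ht).1 this

theorem starBdd_of_eStar {u : ℝ → ℝ} {y : ℝ} (h : eStar u y ≠ ⊤) : StarBdd u y := by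
  refine starBdd_of_le (c := (eStar u y).toReal) fun x => ?_
  exact (ENNReal.ofReal_le_iff_le_toReal h).1
    (le_iSup (fun x => ENNReal.ofReal (u x - x * y)) x)

theorem IsUtility.toReal_eStar {u u' : ℝ → ℝ} (hu : IsUtility u u') (y : ℝ) :
    (eStar u y).toReal = uStar u y := by
  by_cases h : StarBdd u y
  · rw [eStar_eq h, ENNReal.toReal_ofReal (hu.uStar_nonneg y)]
  · have : eStar u y = ⊤ := by
      by_contra h'; exact h (starBdd_of_eStar h')
    rw [this, uStar_of_not_bdd h]; rfl

theorem IsUtility.measurable_uStar {u u' : ℝ → ℝ} (hu : IsUtility u u') :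
    Measurable (uStar u) := by
  have : uStar u = fun y => (eStar u y).toReal := by
    funext y; exact (hu.toReal_eStar y).symm
  rw [this]
  exact (eStar_lsc u).measurable.ennreal_toReal

/-- relaxed admissibility: the values may touch zero where the conjugate is finite -/
structure WAdm {m0 : MeasurableSpace Ω} (P : Measure Ω) (ℱ : Filtration ℕ m0)
    (u : ℕ → ℝ → ℝ) (t T : ℕ) (M : ℕ → Ω → ℝ) : Prop where
  meas : ∀ s ∈ Finset.Icc t T, Measurable[ℱ s] (M s)
  int : ∀ s ∈ Finset.Icc t T, Integrable (M s) P
  nonneg : ∀ s ∈ Finset.Icc t T, ∀ᵐ ω ∂P, 0 ≤ M s ω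
  bdd : ∀ s ∈ Finset.Icc t T, ∀ᵐ ω ∂P, StarBdd (u s) (M s ω)
  mart : ∀ r ∈ Finset.Icc t T, ∀ s ∈ Finset.Icc t T, r ≤ s →
    (P[M s | ℱ r]) =ᵐ[P] M r
  intS : ∀ s ∈ Finset.Icc t T, Integrable (fun ω => uStar (u s) (M s ω)) P

/-- admissibility -/
def Adm {m0 : MeasurableSpace Ω} (P : Measure Ω) (ℱ : Filtration ℕ m0)
    (u : ℕ → ℝ → ℝ) (t T : ℕ) (M : ℕ → Ω → ℝ) : Prop :=
  IsPosMart P ℱ t T M ∧ ∀ s ∈ Finset.Icc t T, Integrable (fun ω => uStar (u s) (M s ω)) P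

/-- unconditional objective -/
noncomputable def Jobj {m0 : MeasurableSpace Ω} (P : Measure Ω)
    (u : ℕ → ℝ → ℝ) (t T : ℕ) (Z : Ω → ℝ) (M : ℕ → Ω → ℝ) : ℝ :=
  (∑ s ∈ Finset.Icc t T, ∫ ω, uStar (u s) (M s ω) ∂P) + ∫ ω, M T ω * Z ω ∂P

theorem Adm.wadm {m0 : MeasurableSpace Ω} {P : Measure Ω} {ℱ : Filtration ℕ m0}
    {u u' : ℕ → ℝ → ℝ} (hu : ∀ s, IsUtility (u s) (u' s)) {t T : ℕ} {M : ℕ → Ω → ℝ}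
    (h : Adm P ℱ u t T M) : WAdm P ℱ u t T M where
  meas s hs := (h.1.1 s hs).1
  int s hs := (h.1.1 s hs).2.1
  nonneg s hs := (h.1.1 s hs).2.2.mono fun _ h => h.le
  bdd s hs := (h.1.1 s hs).2.2.mono fun _ h => (hu s).starBdd h
  mart := h.1.2
  intS := h.2

theorem adm_conv {m0 : MeasurableSpace Ω} {P : Measure Ω} {ℱ : Filtration ℕ m0}
    {u u' : ℕ → ℝ → ℝ} (hu : ∀ s, IsUtility (u s) (u' s)) {t T : ℕ} {M L : ℕ → Ω → ℝ}
    (hM : WAdm P ℱ u t T M) (hL : Adm P ℱ u t T L) {a b : ℝ} (ha : 0 ≤ a) (hb : 0 < b)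
    (hab : a + b = 1) : Adm P ℱ u t T (fun s ω => a * M s ω + b * L s ω) := by
  have hL' := hL.wadm hu
  refine ⟨⟨fun s hs => ⟨?_, ?_, ?_⟩, ?_⟩, ?_⟩
  · exact ((hM.meas s hs).const_mul a).add ((hL'.meas s hs).const_mul b)
  · exact ((hM.int s hs).const_mul a).add ((hL'.int s hs).const_mul b)
  · filter_upwards [hM.nonneg s hs, (hL.1.1 s hs).2.2] with ω h1 h2
    positivity
  · intro r hr s hs hrs
    have e := condExp_add (m := ℱ r) (((hM.int s hs).const_mul a))
      ((hL'.int s hs).const_mul b)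
    have e1 := condExp_smul (μ := P) a (M s) (ℱ r)
    have e2 := condExp_smul (μ := P) b (L s) (ℱ r)
    filter_upwards [e, e1, e2, hM.mart r hr s hs hrs, hL'.mart r hr s hs hrs]
      with ω h0 h1 h2 h3 h4
    refine h0.trans ?_
    change (P[a • M s|ℱ r]) ω + (P[b • L s|ℱ r]) ω = _
    rw [h1, h2]
    simp [h3, h4]
  · intro s hs
    refine (((hM.intS s hs).const_mul a).add ((hL'.intS s hs).const_mul b)).mono' ?_ ?_
    · have h1 : Measurable (M s) := (hM.meas s hs).mono (ℱ.le s) le_rfl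
      have h2 : Measurable (L s) := (hL'.meas s hs).mono (ℱ.le s) le_rfl
      exact ((hu s).measurable_uStar.comp
        ((h1.const_mul a).add (h2.const_mul b))).aestronglyMeasurable
    · filter_upwards [hM.bdd s hs, hL'.bdd s hs] with ω h1 h2
      rw [Real.norm_of_nonneg ((hu s).uStar_nonneg _)]
      exact uStar_conv h1 h2 ha hb.le hab

theorem adm_one {m0 : MeasurableSpace Ω} {P : Measure Ω} [IsProbabilityMeasure P]
    {ℱ : Filtration ℕ m0}
    {u : ℕ → ℝ → ℝ} {t T : ℕ} :
    Adm P ℱ u t T (fun _ _ => 1) := by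
  refine ⟨⟨fun s hs => ⟨measurable_const, integrable_const _, ?_⟩, ?_⟩, ?_⟩
  · exact Eventually.of_forall fun _ => one_pos
  · intro r _ s _ _
    rw [condExp_const (ℱ.le r)]
  · intro s _
    exact integrable_const _

theorem int_mulZ {m0 : MeasurableSpace Ω} {P : Measure Ω} {X Z : Ω → ℝ} {C : ℝ}
    (hX : Integrable X P) (hZm : Measurable Z) (hZ : ∀ ω, |Z ω| ≤ C) :
    Integrable (fun ω => X ω * Z ω) P :=
  hX.mul_bdd hZm.aestronglyMeasurable (Eventually.of_forall hZ)

theorem J_lower {m0 : MeasurableSpace Ω} {P : Measure Ω} [IsProbabilityMeasure P]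
    {ℱ : Filtration ℕ m0}
    {u u' : ℕ → ℝ → ℝ} (hu : ∀ s, IsUtility (u s) (u' s)) {t T : ℕ} (ht : t ≤ T)
    {M : ℕ → Ω → ℝ} {Z : Ω → ℝ} {C : ℝ}
    (hZm : Measurable Z) (hZ : ∀ ω, |Z ω| ≤ C) (hM : Adm P ℱ u t T M) :
    2⁻¹ * ∫ ω, uStar (u T) (M T ω) ∂P + 2⁻¹ * u T (-(2 * C)) ≤ Jobj P u t T Z M := by
  have hT : T ∈ Finset.Icc t T := Finset.mem_Icc.2 ⟨ht, le_rfl⟩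
  have h1 : ∫ ω, uStar (u T) (M T ω) ∂P ≤ ∑ s ∈ Finset.Icc t T, ∫ ω, uStar (u s) (M s ω) ∂P :=
    Finset.single_le_sum (f := fun s => ∫ ω, uStar (u s) (M s ω) ∂P)
      (fun s _ => integral_nonneg fun ω => (hu s).uStar_nonneg _) hT
  have hMi := (hM.1.1 T hT).2.1
  have h2 : ∫ ω, (2⁻¹ * u T (-(2 * C)) - 2⁻¹ * uStar (u T) (M T ω)) ∂P
      ≤ ∫ ω, M T ω * Z ω ∂P := by
    refine integral_mono_ae ((integrable_const _).sub ((hM.2 T hT).const_mul _))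
      (int_mulZ hMi hZm hZ) ?_
    filter_upwards [(hM.1.1 T hT).2.2] with ω hω
    have := le_uStar ((hu T).starBdd hω) (-(2 * C))
    have hz := (abs_le.1 (hZ ω)).1
    nlinarith
  rw [integral_sub (integrable_const _) ((hM.2 T hT).const_mul _)] at h2
  simp only [integral_const, probReal_univ, smul_eq_mul, one_mul] at h2
  rw [integral_const_mul] at h2
  unfold Jobj
  linarith

/-- integrand -/
noncomputable def Hobj (u : ℕ → ℝ → ℝ) (t T : ℕ) (Z : Ω → ℝ) (M : ℕ → Ω → ℝ) : Ω → ℝ :=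
  fun ω => (∑ s ∈ Finset.Icc t T, uStar (u s) (M s ω)) + M T ω * Z ω

theorem Hobj_int {m0 : MeasurableSpace Ω} {P : Measure Ω} {ℱ : Filtration ℕ m0}
    {u : ℕ → ℝ → ℝ} {t T : ℕ} (ht : t ≤ T)
    {M : ℕ → Ω → ℝ} {Z : Ω → ℝ} {C : ℝ}
    (hZm : Measurable Z) (hZ : ∀ ω, |Z ω| ≤ C) (hM : Adm P ℱ u t T M) :
    Integrable (Hobj u t T Z M) P :=
  (integrable_finsetSum _ hM.2).add
    (int_mulZ (hM.1.1 T (Finset.mem_Icc.2 ⟨ht, le_rfl⟩)).2.1 hZm hZ)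

theorem Hobj_integral {m0 : MeasurableSpace Ω} {P : Measure Ω} {ℱ : Filtration ℕ m0}
    {u : ℕ → ℝ → ℝ} {t T : ℕ} (ht : t ≤ T)
    {M : ℕ → Ω → ℝ} {Z : Ω → ℝ} {C : ℝ}
    (hZm : Measurable Z) (hZ : ∀ ω, |Z ω| ≤ C) (hM : Adm P ℱ u t T M) :
    ∫ ω, Hobj u t T Z M ω ∂P = Jobj P u t T Z M := by
  unfold Hobj Jobj
  rw [integral_add (integrable_finsetSum _ hM.2)
    (int_mulZ (hM.1.1 T (Finset.mem_Icc.2 ⟨ht, le_rfl⟩)).2.1 hZm hZ), integral_finsetSum _ hM.2]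

theorem dualObj_eq {m0 : MeasurableSpace Ω} {P : Measure Ω} {ℱ : Filtration ℕ m0}
    {u : ℕ → ℝ → ℝ} {t T : ℕ} (ht : t ≤ T)
    {M : ℕ → Ω → ℝ} {Z : Ω → ℝ} {C : ℝ}
    (hZm : Measurable Z) (hZ : ∀ ω, |Z ω| ≤ C) (hM : Adm P ℱ u t T M) :
    dualObj P ℱ u t T Z M =ᵐ[P] P[Hobj u t T Z M | ℱ t] := by
  have e1 := condExp_add (m := ℱ t) (μ := P)
    (f := ∑ s ∈ Finset.Icc t T, fun ω => uStar (u s) (M s ω))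
    (integrable_finsetSum' _ hM.2)
    (int_mulZ (hM.1.1 T (Finset.mem_Icc.2 ⟨ht, le_rfl⟩)).2.1 hZm hZ)
  have e2 := condExp_finsetSum (m := ℱ t) (μ := P) (s := Finset.Icc t T)
    (f := fun s ω => uStar (u s) (M s ω)) hM.2
  have e3 : Hobj u t T Z M = (∑ s ∈ Finset.Icc t T, fun ω => uStar (u s) (M s ω)) +
      fun ω => M T ω * Z ω := by
    funext ω; simp [Hobj]
  rw [e3]
  filter_upwards [e1, e2] with ω h1 h2
  rw [h1, Pi.add_apply, h2]
  simp [dualObj]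

theorem paste_adm {m0 : MeasurableSpace Ω} {P : Measure Ω} {ℱ : Filtration ℕ m0}
    {u : ℕ → ℝ → ℝ} {t T : ℕ} {M L : ℕ → Ω → ℝ}
    (hM : Adm P ℱ u t T M) (hL : Adm P ℱ u t T L) {A : Set Ω} (hA : MeasurableSet[ℱ t] A) :
    Adm P ℱ u t T (fun s => A.indicator (L s) + Aᶜ.indicator (M s)) := by
  have hA0 : MeasurableSet A := ℱ.le t A hA
  have hAs : ∀ s ∈ Finset.Icc t T, MeasurableSet[ℱ s] A := fun s hs =>
    ℱ.mono (Finset.mem_Icc.1 hs).1 A hA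
  refine ⟨⟨fun s hs => ⟨?_, ?_, ?_⟩, ?_⟩, ?_⟩
  · exact ((hL.1.1 s hs).1.indicator (hAs s hs)).add
      ((hM.1.1 s hs).1.indicator (hAs s hs).compl)
  · exact ((hL.1.1 s hs).2.1.indicator hA0).add ((hM.1.1 s hs).2.1.indicator hA0.compl)
  · filter_upwards [(hL.1.1 s hs).2.2, (hM.1.1 s hs).2.2] with ω h1 h2
    by_cases h : ω ∈ A <;> simp [h, h1, h2]
  · intro r hr s hs hrs
    have e := condExp_add (m := ℱ r) ((hL.1.1 s hs).2.1.indicator hA0)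
      ((hM.1.1 s hs).2.1.indicator hA0.compl)
    have e1 := condExp_indicator (hL.1.1 s hs).2.1 (hAs r hr)
    have e2 := condExp_indicator (hM.1.1 s hs).2.1 (hAs r hr).compl
    filter_upwards [e, e1, e2, hM.1.2 r hr s hs hrs, hL.1.2 r hr s hs hrs]
      with ω h0 h1 h2 h3 h4
    rw [h0, Pi.add_apply, h1, h2]
    by_cases h : ω ∈ A <;> simp [h, h3, h4]
  · intro s hs
    have : (fun ω => uStar (u s) ((A.indicator (L s) + Aᶜ.indicator (M s)) ω)) =
        A.indicator (fun ω => uStar (u s) (L s ω)) +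
        Aᶜ.indicator (fun ω => uStar (u s) (M s ω)) := by
      funext ω
      by_cases h : ω ∈ A <;> simp [h]
    rw [this]
    exact ((hL.2 s hs).indicator hA0).add ((hM.2 s hs).indicator hA0.compl)

theorem cond_min {m0 : MeasurableSpace Ω} {P : Measure Ω} [IsProbabilityMeasure P]
    {ℱ : Filtration ℕ m0}
    {u : ℕ → ℝ → ℝ} {t T : ℕ} (ht : t ≤ T)
    {M L : ℕ → Ω → ℝ} {Z : Ω → ℝ} {C : ℝ}
    (hZm : Measurable Z) (hZ : ∀ ω, |Z ω| ≤ C) (hM : Adm P ℱ u t T M)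
    (hmin : ∀ L, Adm P ℱ u t T L → Jobj P u t T Z M ≤ Jobj P u t T Z L)
    (hL : Adm P ℱ u t T L) :
    dualObj P ℱ u t T Z M ≤ᵐ[P] dualObj P ℱ u t T Z L := by
  have iM := Hobj_int ht hZm hZ hM
  have iL := Hobj_int ht hZm hZ hL
  set D := P[Hobj u t T Z L | ℱ t] - P[Hobj u t T Z M | ℱ t] with hD
  have hDm : StronglyMeasurable[ℱ t] D := stronglyMeasurable_condExp.sub stronglyMeasurable_condExp
  have hDi : Integrable D P := integrable_condExp.sub integrable_condExp
  have key : ∀ A, MeasurableSet[ℱ t] A → 0 ≤ ∫ ω in A, D ω ∂P := by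
    intro A hA
    have hA0 : MeasurableSet A := ℱ.le t A hA
    have hK := paste_adm hM hL hA
    have h1 := hmin _ hK
    rw [← Hobj_integral ht hZm hZ hM, ← Hobj_integral ht hZm hZ hK] at h1
    rw [← integral_add_compl hA0 iM, ← integral_add_compl hA0 (Hobj_int ht hZm hZ hK)] at h1
    have h2 : ∫ ω in A, Hobj u t T Z (fun s => A.indicator (L s) + Aᶜ.indicator (M s)) ω ∂P
        = ∫ ω in A, Hobj u t T Z L ω ∂P := by
      refine setIntegral_congr_fun hA0 fun ω h => ?_
      simp [Hobj, h]
    have h3 : ∫ ω in Aᶜ, Hobj u t T Z (fun s => A.indicator (L s) + Aᶜ.indicator (M s)) ω ∂P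
        = ∫ ω in Aᶜ, Hobj u t T Z M ω ∂P := by
      refine setIntegral_congr_fun hA0.compl fun ω h => ?_
      have h' : ω ∉ A := h
      simp [Hobj, h']
    rw [h2, h3] at h1
    have h4 : ∫ ω in A, D ω ∂P = ∫ ω in A, Hobj u t T Z L ω ∂P - ∫ ω in A, Hobj u t T Z M ω ∂P := by
      rw [hD]
      simp only [Pi.sub_apply]
      rw [integral_sub integrable_condExp.integrableOn integrable_condExp.integrableOn,
        setIntegral_condExp (ℱ.le t) iL hA, setIntegral_condExp (ℱ.le t) iM hA]
    rw [h4]; linarith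
  have hpos : 0 ≤ᵐ[P] D := by
    have : (0 : Ω → ℝ) ≤ᵐ[P.trim (ℱ.le t)] D := by
      refine ae_nonneg_of_forall_setIntegral_nonneg (hDi.trim (ℱ.le t) hDm) fun A hA _ => ?_
      rw [← setIntegral_trim (ℱ.le t) hDm hA]
      exact key A hA
    exact ae_le_of_ae_le_trim this
  filter_upwards [hpos, dualObj_eq ht hZm hZ hM, dualObj_eq ht hZm hZ hL] with ω h1 h2 h3
  rw [h2, h3]
  simpa [hD] using h1

theorem integral_dualObj {m0 : MeasurableSpace Ω} {P : Measure Ω} [IsProbabilityMeasure P]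
    {ℱ : Filtration ℕ m0}
    {u : ℕ → ℝ → ℝ} {t T : ℕ} (ht : t ≤ T)
    {M : ℕ → Ω → ℝ} {Z : Ω → ℝ} {C : ℝ}
    (hZm : Measurable Z) (hZ : ∀ ω, |Z ω| ≤ C) (hM : Adm P ℱ u t T M) :
    Integrable (dualObj P ℱ u t T Z M) P ∧
    ∫ ω, dualObj P ℱ u t T Z M ω ∂P = Jobj P u t T Z M := by
  have h := dualObj_eq ht hZm hZ hM
  refine ⟨integrable_condExp.congr h.symm, ?_⟩
  rw [integral_congr_ae h, integral_condExp (ℱ.le t), Hobj_integral ht hZm hZ hM]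

/-- the midpoint inequality -/
theorem defect_bound {m0 : MeasurableSpace Ω} {P : Measure Ω} [IsProbabilityMeasure P]
    {ℱ : Filtration ℕ m0}
    {u u' : ℕ → ℝ → ℝ} (hu : ∀ s, IsUtility (u s) (u' s)) {t T : ℕ} (ht : t ≤ T)
    {M L : ℕ → Ω → ℝ} {Z : Ω → ℝ} {C I : ℝ}
    (hZm : Measurable Z) (hZ : ∀ ω, |Z ω| ≤ C) (hM : Adm P ℱ u t T M) (hL : Adm P ℱ u t T L)
    (hI : ∀ L, Adm P ℱ u t T L → I ≤ Jobj P u t T Z L) {s : ℕ} (hs : s ∈ Finset.Icc t T) :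
    Integrable (fun ω => defect (u s) (M s ω) (L s ω)) P ∧
    ∫ ω, defect (u s) (M s ω) (L s ω) ∂P ≤
      2⁻¹ * Jobj P u t T Z M + 2⁻¹ * Jobj P u t T Z L - I := by
  have hN := adm_conv hu (hM.wadm hu) hL (a := 2⁻¹) (b := 2⁻¹) (by norm_num) (by norm_num)
    (by norm_num)
  have hintg : ∀ s ∈ Finset.Icc t T, Integrable (fun ω => defect (u s) (M s ω) (L s ω)) P :=
    fun s hs => (((hM.2 s hs).const_mul _).add ((hL.2 s hs).const_mul _)).sub (hN.2 s hs)
  refine ⟨hintg s hs, ?_⟩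
  have hT : T ∈ Finset.Icc t T := Finset.mem_Icc.2 ⟨ht, le_rfl⟩
  have h1 : ∫ ω, defect (u s) (M s ω) (L s ω) ∂P ≤
      ∑ s ∈ Finset.Icc t T, ∫ ω, defect (u s) (M s ω) (L s ω) ∂P := by
    refine Finset.single_le_sum (f := fun s => ∫ ω, defect (u s) (M s ω) (L s ω) ∂P)
      (fun s hs => integral_nonneg_of_ae ?_) hs
    filter_upwards [(hM.1.1 s hs).2.2, (hL.1.1 s hs).2.2] with ω h1 h2
    exact (hu s).defect_nonneg h1 h2
  have h2 : ∀ s ∈ Finset.Icc t T, ∫ ω, defect (u s) (M s ω) (L s ω) ∂P =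
      2⁻¹ * ∫ ω, uStar (u s) (M s ω) ∂P + 2⁻¹ * ∫ ω, uStar (u s) (L s ω) ∂P -
        ∫ ω, uStar (u s) (2⁻¹ * M s ω + 2⁻¹ * L s ω) ∂P := by
    intro s hs
    unfold defect
    have hsum : Integrable (fun ω => 2⁻¹ * uStar (u s) (M s ω) + 2⁻¹ * uStar (u s) (L s ω)) P :=
      ((hM.2 s hs).const_mul _).add ((hL.2 s hs).const_mul _)
    have hNs : Integrable (fun ω => uStar (u s) (2⁻¹ * M s ω + 2⁻¹ * L s ω)) P := hN.2 s hs
    rw [integral_sub hsum hNs,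
      integral_add ((hM.2 s hs).const_mul _) ((hL.2 s hs).const_mul _),
      integral_const_mul, integral_const_mul]
  have h3 : ∫ ω, (2⁻¹ * M T ω + 2⁻¹ * L T ω) * Z ω ∂P =
      2⁻¹ * ∫ ω, M T ω * Z ω ∂P + 2⁻¹ * ∫ ω, L T ω * Z ω ∂P := by
    rw [← integral_const_mul, ← integral_const_mul, ← integral_add]
    · congr 1; funext ω; ring
    · exact (int_mulZ (hM.1.1 T hT).2.1 hZm hZ).const_mul _
    · exact (int_mulZ (hL.1.1 T hT).2.1 hZm hZ).const_mul _
  have h4 := hI _ hN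
  rw [Finset.sum_congr rfl h2, Finset.sum_sub_distrib, Finset.sum_add_distrib,
    ← Finset.mul_sum, ← Finset.mul_sum] at h1
  unfold Jobj at h4 ⊢
  rw [h3] at h4
  linarith

theorem uniq {m0 : MeasurableSpace Ω} {P : Measure Ω} [IsProbabilityMeasure P]
    {ℱ : Filtration ℕ m0}
    {u u' : ℕ → ℝ → ℝ} (hu : ∀ s, IsUtility (u s) (u' s)) {t T : ℕ} (ht : t ≤ T)
    {M L : ℕ → Ω → ℝ} {Z : Ω → ℝ} {C : ℝ}
    (hZm : Measurable Z) (hZ : ∀ ω, |Z ω| ≤ C) (hM : Adm P ℱ u t T M) (hL : Adm P ℱ u t T L)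
    (hmin : ∀ L, Adm P ℱ u t T L → Jobj P u t T Z M ≤ Jobj P u t T Z L)
    (hLM : Jobj P u t T Z L ≤ Jobj P u t T Z M) {s : ℕ} (hs : s ∈ Finset.Icc t T) :
    L s =ᵐ[P] M s := by
  obtain ⟨hi, h1⟩ := defect_bound hu ht hZm hZ hM hL hmin hs
  have hnn : 0 ≤ᵐ[P] fun ω => defect (u s) (M s ω) (L s ω) := by
    filter_upwards [(hM.1.1 s hs).2.2, (hL.1.1 s hs).2.2] with ω h1 h2
    exact (hu s).defect_nonneg h1 h2
  have h0 : ∫ ω, defect (u s) (M s ω) (L s ω) ∂P = 0 :=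
    le_antisymm (by linarith) (integral_nonneg_of_ae hnn)
  rw [integral_eq_zero_iff_of_nonneg_ae hnn hi] at h0
  filter_upwards [h0, (hM.1.1 s hs).2.2, (hL.1.1 s hs).2.2] with ω h1 h2 h3
  by_contra hne
  have := (hu s).defect_pos h2 h3 (Ne.symm hne)
  simp only [Pi.zero_apply] at h1
  linarith

theorem IsUtility.deriv_pos {u u' : ℝ → ℝ} (hu : IsUtility u u') (x : ℝ) : 0 < u' x := by
  have h1 := hu.tangent x (x + 1)
  have h2 := hu.strictMono (by linarith : x < x + 1)
  have h3 : x + 1 - x = 1 := by ring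
  rw [h3] at h1
  linarith

theorem IsUtility.deriv_le_one {u u' : ℝ → ℝ} (hu : IsUtility u u') {x : ℝ} (hx : 0 < x) :
    u' x ≤ 1 := by
  have h1 := hu.tangent x 0
  have h2 := hu.tangent 0 x
  rw [hu.deriv_zero] at h2
  by_contra h
  push Not at h
  nlinarith

theorem wadm_pos {m0 : MeasurableSpace Ω} {P : Measure Ω} [IsProbabilityMeasure P]
    {ℱ : Filtration ℕ m0}
    {u u' : ℕ → ℝ → ℝ} (hu : ∀ s, IsUtility (u s) (u' s)) {t T : ℕ} (ht : t ≤ T)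
    {M : ℕ → Ω → ℝ} {Z : Ω → ℝ} {C I : ℝ}
    (hZm : Measurable Z) (hZ : ∀ ω, |Z ω| ≤ C) (hM : WAdm P ℱ u t T M)
    (hI : ∀ L, Adm P ℱ u t T L → I ≤ Jobj P u t T Z L) (hMI : Jobj P u t T Z M ≤ I) :
    Adm P ℱ u t T M := by
  have hT : T ∈ Finset.Icc t T := Finset.mem_Icc.2 ⟨ht, le_rfl⟩
  refine ⟨⟨fun s hs => ⟨hM.meas s hs, hM.int s hs, ?_⟩, hM.mart⟩, hM.intS⟩
  have hMm : Measurable (M s) := (hM.meas s hs).mono (ℱ.le s) le_rfl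
  set A : Set Ω := {ω | M s ω = 0} with hA
  have hAm : MeasurableSet A := hMm (measurableSet_singleton 0)
  set K0 : ℝ := ∫ ω, Z ω ∂P - ∫ ω, M T ω * Z ω ∂P with hK0
  have hZi : Integrable Z P := by
    have := int_mulZ (P := P) (integrable_const (1 : ℝ)) hZm hZ
    simpa using this
  have key : ∀ x > 0, x * P.real A ≤ K0 := by
    intro x hx
    set l := u' s x with hl
    have hl0 : 0 < l := (hu s).deriv_pos x
    have hl1 : l ≤ 1 := (hu s).deriv_le_one hx
    have hN := adm_conv hu hM (adm_one (P := P) (ℱ := ℱ) (u := u)) (a := 1 - l) (b := l)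
      (by linarith) hl0 (by ring)
    have hJ := hMI.trans (hI _ hN)
    have hle : ∀ r ∈ Finset.Icc t T, ∀ᵐ ω ∂P,
        uStar (u r) ((1 - l) * M r ω + l * 1) ≤ uStar (u r) (M r ω) := by
      intro r hr
      filter_upwards [hM.bdd r hr] with ω h1
      have h2 := uStar_conv h1 ((hu r).starBdd one_pos) (a := 1 - l) (b := l)
        (by linarith) hl0.le (by ring)
      rw [(hu r).uStar_one] at h2
      have h3 := mul_nonneg hl0.le ((hu r).uStar_nonneg (M r ω))
      linarith
    have hle' : ∀ᵐ ω ∂P, uStar (u s) ((1 - l) * M s ω + l * 1) ≤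
        uStar (u s) (M s ω) - A.indicator (fun _ => l * x) ω := by
      filter_upwards [hM.bdd s hs, hle s hs] with ω h1 h2
      by_cases h : ω ∈ A
      · have h0 : M s ω = 0 := h
        rw [Set.indicator_of_mem h]
        rw [h0] at h1 ⊢
        have h3 := le_uStar h1 x
        have h4 := (hu s).uStar_deriv x
        rw [← hl] at h4
        have h5 : (1 - l) * 0 + l * 1 = l := by ring
        rw [h5, h4]
        linarith
      · rw [Set.indicator_of_notMem h]; linarith
    have hsum : ∑ r ∈ Finset.Icc t T, ∫ ω, uStar (u r) ((1 - l) * M r ω + l * 1) ∂P ≤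
        ∑ r ∈ Finset.Icc t T, ((∫ ω, uStar (u r) (M r ω) ∂P) -
          if r = s then l * x * P.real A else 0) := by
      refine Finset.sum_le_sum fun r hr => ?_
      by_cases h : r = s
      · subst h
        have hind : Integrable (A.indicator (fun _ => l * x)) P :=
          (integrable_const _).indicator hAm
        have := integral_mono_ae (hN.2 r hr) ((hM.intS r hr).sub hind) hle'
        simp only [Pi.sub_apply] at this
        rw [integral_sub (hM.intS r hr) hind, integral_indicator_const _ hAm, smul_eq_mul] at this
        simp only [if_true]
        linarith
      · simp only [h, if_false, sub_zero]
        exact integral_mono_ae (hN.2 r hr) (hM.intS r hr) (hle r hr)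
    rw [Finset.sum_sub_distrib, Finset.sum_ite_eq' _ s, if_pos hs] at hsum
    have h3 : ∫ ω, ((1 - l) * M T ω + l * 1) * Z ω ∂P =
        (1 - l) * ∫ ω, M T ω * Z ω ∂P + l * ∫ ω, Z ω ∂P := by
      rw [← integral_const_mul, ← integral_const_mul, ← integral_add]
      · congr 1; funext ω; ring
      · exact (int_mulZ (hM.int T hT) hZm hZ).const_mul _
      · exact hZi.const_mul _
    unfold Jobj at hJ
    rw [h3] at hJ
    have h4 : l * (x * P.real A) ≤ l * K0 := by rw [hK0]; linarith
    exact le_of_mul_le_mul_left h4 hl0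
  have hp : P.real A = 0 := by
    by_contra hne
    have hp : 0 < P.real A := lt_of_le_of_ne measureReal_nonneg (Ne.symm hne)
    have := key ((|K0| + 1) / P.real A) (by positivity)
    rw [div_mul_cancel₀ _ hne] at this
    linarith [le_abs_self K0]
  have hp' : P A = 0 := by
    rwa [measureReal_eq_zero_iff] at hp
  have hae : ∀ᵐ ω ∂P, ω ∉ A := measure_eq_zero_iff_ae_notMem.1 hp'
  filter_upwards [hM.nonneg s hs, hae] with ω h1 h2
  exact lt_of_le_of_ne h1 (fun h => h2 h.symm)

theorem cauchy_min {m0 : MeasurableSpace Ω} {P : Measure Ω} [IsProbabilityMeasure P]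
    {ℱ : Filtration ℕ m0}
    {u u' : ℕ → ℝ → ℝ} (hu : ∀ s, IsUtility (u s) (u' s)) {t T : ℕ} (ht : t ≤ T)
    {M : ℕ → ℕ → Ω → ℝ} {Z : Ω → ℝ} {C I : ℝ}
    (hZm : Measurable Z) (hZ : ∀ ω, |Z ω| ≤ C) (hM : ∀ n, Adm P ℱ u t T (M n))
    (hI : ∀ L, Adm P ℱ u t T L → I ≤ Jobj P u t T Z L)
    (hlim : Tendsto (fun n => Jobj P u t T Z (M n)) atTop (nhds I)) {ε : ℝ} (hε : 0 < ε) :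
    ∃ N, ∀ n ≥ N, ∀ m ≥ N, ∫ ω, |M n T ω - M m T ω| ∂P < ε := by
  have hT : T ∈ Finset.Icc t T := Finset.mem_Icc.2 ⟨ht, le_rfl⟩
  set B : ℝ := |2 * (I + 1) - u T (-(2 * C))| with hB
  have hB0 : 0 ≤ B := abs_nonneg _
  obtain ⟨C', hC', hd⟩ := (hu T).dist_le (ε := ε / (2 * (1 + 2 * B))) (by positivity)
  have e1 : ∀ᶠ n in atTop, Jobj P u t T Z (M n) < I + 1 :=
    hlim.eventually (gt_mem_nhds (by linarith))
  have e2 : ∀ᶠ n in atTop, Jobj P u t T Z (M n) < I + ε / (2 * (C' + 1)) :=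
    hlim.eventually (gt_mem_nhds (by linarith [(by positivity : 0 < ε / (2 * (C' + 1)))]))
  obtain ⟨N, hN⟩ := eventually_atTop.1 (e1.and e2)
  refine ⟨N, fun n hn m hm => ?_⟩
  have hb : ∀ n ≥ N, ∫ ω, uStar (u T) (M n T ω) ∂P ≤ B := by
    intro n hn
    have h1 := J_lower hu ht hZm hZ (hM n)
    have h2 := (hN n hn).1
    have := le_abs_self (2 * (I + 1) - u T (-(2 * C)))
    linarith
  obtain ⟨di, db⟩ := defect_bound hu ht hZm hZ (hM n) (hM m) hI hT
  set e := ε / (2 * (1 + 2 * B)) with he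
  have i1 : Integrable (fun ω => 1 + uStar (u T) (M n T ω)) P :=
    (integrable_const _).add ((hM n).2 T hT)
  have i2 : Integrable (fun ω => 1 + uStar (u T) (M n T ω) + uStar (u T) (M m T ω)) P :=
    i1.add ((hM m).2 T hT)
  have h1 : ∫ ω, |M n T ω - M m T ω| ∂P ≤ ∫ ω, (e * (1 + uStar (u T) (M n T ω) +
      uStar (u T) (M m T ω)) + C' * defect (u T) (M n T ω) (M m T ω)) ∂P := by
    refine integral_mono_ae (((hM n).1.1 T hT).2.1.sub ((hM m).1.1 T hT).2.1).abs
      ((i2.const_mul _).add (di.const_mul _)) ?_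
    filter_upwards [((hM n).1.1 T hT).2.2, ((hM m).1.1 T hT).2.2] with ω h1 h2
    exact hd _ _ h1 h2
  rw [integral_add (i2.const_mul _) (di.const_mul _), integral_const_mul, integral_const_mul,
    integral_add i1 ((hM m).2 T hT), integral_add (integrable_const _) ((hM n).2 T hT)] at h1
  simp only [integral_const, probReal_univ, smul_eq_mul, one_mul] at h1
  have h2 : e * (1 + ∫ ω, uStar (u T) (M n T ω) ∂P + ∫ ω, uStar (u T) (M m T ω) ∂P)
      ≤ e * (1 + 2 * B) := by
    have : 0 ≤ e := by positivity
    refine mul_le_mul_of_nonneg_left ?_ this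
    linarith [hb n hn, hb m hm]
  have h3 : e * (1 + 2 * B) = ε / 2 := by rw [he]; field_simp
  have h4 : C' * ∫ ω, defect (u T) (M n T ω) (M m T ω) ∂P ≤ C' * (ε / (2 * (C' + 1))) := by
    gcongr
    linarith [(hN n hn).2, (hN m hm).2]
  have h5 : C' * (ε / (2 * (C' + 1))) < ε / 2 := by
    rw [← mul_div_assoc, div_lt_div_iff₀ (by positivity) (by norm_num)]
    nlinarith
  linarith

theorem l1_limit {m0 : MeasurableSpace Ω} {P : Measure Ω} {X : ℕ → Ω → ℝ}
    (hX : ∀ n, Integrable (X n) P)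
    (hc : ∀ ε > 0, ∃ N, ∀ n ≥ N, ∀ m ≥ N, ∫ ω, |X n ω - X m ω| ∂P < ε) :
    ∃ g : Ω → ℝ, Integrable g P ∧ Tendsto (fun n => ∫ ω, |X n ω - g ω| ∂P) atTop (nhds 0) := by
  have hcs : CauchySeq fun n => (hX n).toL1 (X n) := by
    rw [Metric.cauchySeq_iff]
    intro ε hε
    obtain ⟨N, hN⟩ := hc ε hε
    refine ⟨N, fun n hn m hm => ?_⟩
    rw [L1.dist_eq_integral_dist]
    refine lt_of_eq_of_lt (integral_congr_ae ?_) (hN n hn m hm)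
    filter_upwards [(hX n).coeFn_toL1, (hX m).coeFn_toL1] with ω h1 h2
    rw [h1, h2, Real.dist_eq]
  obtain ⟨g, hg⟩ := cauchySeq_tendsto_of_complete hcs
  refine ⟨g, L1.integrable_coeFn g, ?_⟩
  rw [tendsto_iff_dist_tendsto_zero] at hg
  refine hg.congr fun n => ?_
  rw [L1.dist_eq_integral_dist]
  refine integral_congr_ae ?_
  filter_upwards [(hX n).coeFn_toL1] with ω h1
  rw [h1, Real.dist_eq]

theorem ae_subseq {m0 : MeasurableSpace Ω} {P : Measure Ω} {h : ℕ → Ω → ℝ}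
    (hi : ∀ n, Integrable (h n) P)
    (hl : Tendsto (fun n => ∫ ω, |h n ω| ∂P) atTop (nhds 0)) :
    ∃ φ : ℕ → ℕ, StrictMono φ ∧ ∀ᵐ ω ∂P, Tendsto (fun n => h (φ n) ω) atTop (nhds 0) := by
  have : TendstoInMeasure P h atTop (fun _ => 0) := by
    refine tendstoInMeasure_of_tendsto_eLpNorm (p := 1) one_ne_zero
      (fun n => (hi n).aestronglyMeasurable) aestronglyMeasurable_const ?_
    have h0 := ENNReal.tendsto_ofReal hl
    rw [ENNReal.ofReal_zero] at h0
    refine h0.congr fun n => ?_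
    rw [eLpNorm_one_eq_lintegral_enorm]
    rw [← ofReal_integral_norm_eq_lintegral_enorm]
    · simp
    · exact (hi n).sub (integrable_zero Ω ℝ P)
  exact this.exists_seq_tendsto_ae

theorem fatou_min {m0 : MeasurableSpace Ω} {P : Measure Ω} [IsProbabilityMeasure P]
    {ℱ : Filtration ℕ m0}
    {u u' : ℕ → ℝ → ℝ} (hu : ∀ s, IsUtility (u s) (u' s)) {t T : ℕ} (ht : t ≤ T)
    {X : ℕ → ℕ → Ω → ℝ} {Z : Ω → ℝ} {C I : ℝ}
    (hZm : Measurable Z) (hZ : ∀ ω, |Z ω| ≤ C) (hX : ∀ n, Adm P ℱ u t T (X n))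
    (hlim : Tendsto (fun n => Jobj P u t T Z (X n)) atTop (nhds I))
    {M : ℕ → Ω → ℝ} (hMm : ∀ s ∈ Finset.Icc t T, Measurable[ℱ s] (M s))
    (hMi : ∀ s ∈ Finset.Icc t T, Integrable (M s) P)
    (hmart : ∀ r ∈ Finset.Icc t T, ∀ s ∈ Finset.Icc t T, r ≤ s → (P[M s | ℱ r]) =ᵐ[P] M r)
    (hae : ∀ᵐ ω ∂P, ∀ s ∈ Finset.Icc t T, Tendsto (fun n => X n s ω) atTop (nhds (M s ω)))
    (hZl : Tendsto (fun n => ∫ ω, X n T ω * Z ω ∂P) atTop (nhds (∫ ω, M T ω * Z ω ∂P))) :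
    WAdm P ℱ u t T M ∧ Jobj P u t T Z M ≤ I := by
  have hMm0 : ∀ s ∈ Finset.Icc t T, Measurable (M s) := fun s hs =>
    (hMm s hs).mono (ℱ.le s) le_rfl
  have hXm0 : ∀ n, ∀ s ∈ Finset.Icc t T, Measurable (X n s) := fun n s hs =>
    ((hX n).1.1 s hs).1.mono (ℱ.le s) le_rfl
  have hXpos : ∀ᵐ ω ∂P, ∀ n, ∀ s ∈ Finset.Icc t T, 0 < X n s ω := by
    rw [ae_all_iff]; intro n
    exact (ae_ball_iff (Finset.countable_toSet (Finset.Icc t T))).2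
      fun s hs => ((hX n).1.1 s hs).2.2
  set b : ℝ := I - ∫ ω, M T ω * Z ω ∂P with hb
  have hsl : Tendsto (fun n => ∑ s ∈ Finset.Icc t T, ∫ ω, uStar (u s) (X n s ω) ∂P) atTop
      (nhds b) := by
    refine (hlim.sub hZl).congr fun n => ?_
    unfold Jobj; ring
  have hb0 : 0 ≤ b := ge_of_tendsto' hsl fun n => Finset.sum_nonneg fun s _ =>
    integral_nonneg fun ω => (hu s).uStar_nonneg _
  have hpt : ∀ᵐ ω ∂P, ∑ s ∈ Finset.Icc t T, eStar (u s) (M s ω) ≤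
      liminf (fun n => ∑ s ∈ Finset.Icc t T, eStar (u s) (X n s ω)) atTop := by
    filter_upwards [hae] with ω hω
    let G : (Finset.Icc t T → ℝ) → ENNReal := fun v =>
      ∑ i : Finset.Icc t T, eStar (u i) (v i)
    have hG : LowerSemicontinuous G :=
      lowerSemicontinuous_sum fun i _ =>
        LowerSemicontinuous.comp (f := eStar (u i)) (eStar_lsc (u i)) (continuous_apply i)
    have htend : Tendsto (fun n => fun i : Finset.Icc t T => X n i ω) atTop
        (nhds fun i => M i ω) := tendsto_pi_nhds.2 fun i => hω i i.2
    have h1 := (hG.le_liminf (fun i : Finset.Icc t T => M i ω)).trans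
      (liminf_le_liminf_of_le (u := G) htend)
    have h2 : ∀ v : ℕ → ℝ, G (fun i => v i) = ∑ s ∈ Finset.Icc t T, eStar (u s) (v s) :=
      fun v => Finset.sum_coe_sort (Finset.Icc t T) (fun s => eStar (u s) (v s))
    rw [h2 fun s => M s ω] at h1
    refine h1.trans (le_of_eq ?_)
    change liminf (G ∘ fun n => fun i : Finset.Icc t T => X n i ω) atTop = _
    congr 1
    funext n
    exact h2 fun s => X n s ω
  have hintg : ∀ n, ∫⁻ ω, ∑ s ∈ Finset.Icc t T, eStar (u s) (X n s ω) ∂P =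
      ENNReal.ofReal (∑ s ∈ Finset.Icc t T, ∫ ω, uStar (u s) (X n s ω) ∂P) := by
    intro n
    rw [lintegral_finsetSum' (f := fun s ω => eStar (u s) (X n s ω)) _ fun s hs =>
      ((eStar_lsc (u s)).measurable.comp (hXm0 n s hs)).aemeasurable,
      ENNReal.ofReal_sum_of_nonneg fun s _ => integral_nonneg fun ω => (hu s).uStar_nonneg _]
    refine Finset.sum_congr rfl fun s hs => ?_
    rw [ofReal_integral_eq_lintegral_ofReal ((hX n).2 s hs)
      (Eventually.of_forall fun ω => (hu s).uStar_nonneg _)]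
    refine lintegral_congr_ae ?_
    filter_upwards [hXpos] with ω hω
    exact eStar_eq ((hu s).starBdd (hω n s hs))
  have hfat : ∫⁻ ω, ∑ s ∈ Finset.Icc t T, eStar (u s) (M s ω) ∂P ≤ ENNReal.ofReal b := by
    refine (lintegral_mono_ae hpt).trans ((lintegral_liminf_le' fun n => ?_).trans (le_of_eq ?_))
    · exact Finset.aemeasurable_fun_sum _ fun s hs =>
        ((eStar_lsc (u s)).measurable.comp (hXm0 n s hs)).aemeasurable
    · simp_rw [hintg]
      exact (ENNReal.tendsto_ofReal hsl).liminf_eq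
  rw [lintegral_finsetSum' (f := fun s ω => eStar (u s) (M s ω)) _ fun s hs =>
      ((eStar_lsc (u s)).measurable.comp (hMm0 s hs)).aemeasurable] at hfat
  have hfin : ∀ s ∈ Finset.Icc t T, ∫⁻ ω, eStar (u s) (M s ω) ∂P ≠ ⊤ := by
    intro s hs
    exact ne_top_of_le_ne_top ENNReal.ofReal_ne_top
      ((Finset.single_le_sum (f := fun s => ∫⁻ ω, eStar (u s) (M s ω) ∂P)
        (fun _ _ => zero_le) hs).trans hfat)
  have hbdd : ∀ s ∈ Finset.Icc t T, ∀ᵐ ω ∂P, StarBdd (u s) (M s ω) := by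
    intro s hs
    filter_upwards [ae_lt_top ((eStar_lsc (u s)).measurable.comp (hMm0 s hs)) (hfin s hs)]
      with ω hω
    exact starBdd_of_eStar hω.ne
  have hlin : ∀ s ∈ Finset.Icc t T, ∫⁻ ω, eStar (u s) (M s ω) ∂P =
      ∫⁻ ω, ENNReal.ofReal (uStar (u s) (M s ω)) ∂P := by
    intro s hs
    refine lintegral_congr_ae ?_
    filter_upwards [hbdd s hs] with ω hω
    exact eStar_eq hω
  have hintS : ∀ s ∈ Finset.Icc t T, Integrable (fun ω => uStar (u s) (M s ω)) P := by
    intro s hs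
    refine ⟨((hu s).measurable_uStar.comp (hMm0 s hs)).aestronglyMeasurable, ?_⟩
    rw [hasFiniteIntegral_iff_ofReal (Eventually.of_forall fun ω => (hu s).uStar_nonneg _),
      ← hlin s hs]
    exact lt_top_iff_ne_top.2 (hfin s hs)
  refine ⟨⟨hMm, hMi, ?_, hbdd, hmart, hintS⟩, ?_⟩
  · intro s hs
    filter_upwards [hae, hXpos] with ω h1 h2
    exact ge_of_tendsto' (h1 s hs) fun n => (h2 n s hs).le
  · have h1 : ENNReal.ofReal (∑ s ∈ Finset.Icc t T, ∫ ω, uStar (u s) (M s ω) ∂P) ≤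
        ENNReal.ofReal b := by
      refine le_trans (le_of_eq ?_) hfat
      rw [ENNReal.ofReal_sum_of_nonneg fun s _ => integral_nonneg fun ω => (hu s).uStar_nonneg _]
      refine Finset.sum_congr rfl fun s hs => ?_
      rw [hlin s hs, ofReal_integral_eq_lintegral_ofReal (hintS s hs)
        (Eventually.of_forall fun ω => (hu s).uStar_nonneg _)]
    have h2 := (ENNReal.ofReal_le_ofReal_iff hb0).1 h1
    unfold Jobj
    linarith

theorem exists_min {m0 : MeasurableSpace Ω} {P : Measure Ω} [IsProbabilityMeasure P]
    {ℱ : Filtration ℕ m0}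
    {u u' : ℕ → ℝ → ℝ} (hu : ∀ s, IsUtility (u s) (u' s)) {t T : ℕ} (ht : t ≤ T)
    {Z : Ω → ℝ} {C : ℝ} (hZm : Measurable Z) (hZ : ∀ ω, |Z ω| ≤ C) :
    ∃ M, Adm P ℱ u t T M ∧ ∀ L, Adm P ℱ u t T L → Jobj P u t T Z M ≤ Jobj P u t T Z L := by
  have hT : T ∈ Finset.Icc t T := Finset.mem_Icc.2 ⟨ht, le_rfl⟩
  set S : Set ℝ := {z | ∃ M, Adm P ℱ u t T M ∧ Jobj P u t T Z M = z} with hS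
  have hne : S.Nonempty := ⟨_, _, adm_one, rfl⟩
  have hbb : BddBelow S := by
    refine ⟨2⁻¹ * u T (-(2 * C)), ?_⟩
    rintro _ ⟨M, hM, rfl⟩
    have h1 := J_lower hu ht hZm hZ hM
    have h2 : 0 ≤ ∫ ω, uStar (u T) (M T ω) ∂P := integral_nonneg fun ω => (hu T).uStar_nonneg _
    linarith
  set I := sInf S with hIdef
  have hI : ∀ L, Adm P ℱ u t T L → I ≤ Jobj P u t T Z L := fun L hL =>
    csInf_le hbb ⟨L, hL, rfl⟩
  obtain ⟨z, -, hz, hzS⟩ := exists_seq_tendsto_sInf hne hbb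
  choose X hX hXz using hzS
  have hlim : Tendsto (fun n => Jobj P u t T Z (X n)) atTop (nhds I) := by
    simp_rw [hXz]; exact hz
  have hXi : ∀ n, ∀ s ∈ Finset.Icc t T, Integrable (X n s) P := fun n s hs =>
    ((hX n).1.1 s hs).2.1
  obtain ⟨g, hg, hgl⟩ := l1_limit (fun n => hXi n T hT)
    (fun ε hε => cauchy_min hu ht hZm hZ hX hI hlim hε)
  set M : ℕ → Ω → ℝ := fun s => P[g | ℱ s] with hMdef
  have hMi : ∀ s, Integrable (M s) P := fun s => integrable_condExp
  have hl1 : ∀ s ∈ Finset.Icc t T,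
      Tendsto (fun n => ∫ ω, |X n s ω - M s ω| ∂P) atTop (nhds 0) := by
    intro s hs
    refine squeeze_zero (fun n => integral_nonneg fun ω => abs_nonneg _) (fun n => ?_) hgl
    refine le_trans (le_of_eq (integral_congr_ae ?_))
      (integral_abs_condExp_le (m := ℱ s) (fun ω => X n T ω - g ω))
    filter_upwards [condExp_sub (hXi n T hT) hg (ℱ s),
      (hX n).1.2 s hs T hT (Finset.mem_Icc.1 hs).2] with ω h1 h2
    have h3 : (P[fun ω => X n T ω - g ω|ℱ s]) ω = X n s ω - M s ω := by
      refine h1.trans ?_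
      rw [Pi.sub_apply, h2]
    rw [h3]
  obtain ⟨φ, hφ, hφae⟩ := ae_subseq (P := P)
    (h := fun n ω => ∑ s ∈ Finset.Icc t T, |X n s ω - M s ω|)
    (fun n => integrable_finsetSum _ fun s hs => ((hXi n s hs).sub (hMi s)).abs) (by
      have : Tendsto (fun n => ∑ s ∈ Finset.Icc t T, ∫ ω, |X n s ω - M s ω| ∂P) atTop
          (nhds (∑ s ∈ Finset.Icc t T, (0 : ℝ))) := tendsto_finsetSum _ hl1
      rw [Finset.sum_const_zero] at this
      refine this.congr fun n => ?_
      rw [← integral_finsetSum (f := fun s ω => |X n s ω - M s ω|) _ fun s hs => ((hXi n s hs).sub (hMi s)).abs]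
      congr 1; funext ω
      rw [abs_of_nonneg (Finset.sum_nonneg fun s _ => abs_nonneg _)])
  have hae : ∀ᵐ ω ∂P, ∀ s ∈ Finset.Icc t T,
      Tendsto (fun n => X (φ n) s ω) atTop (nhds (M s ω)) := by
    filter_upwards [hφae] with ω hω s hs
    rw [tendsto_iff_dist_tendsto_zero]
    refine squeeze_zero (fun n => dist_nonneg) (fun n => ?_) hω
    rw [Real.dist_eq]
    exact Finset.single_le_sum (f := fun s => |X (φ n) s ω - M s ω|)
      (fun s _ => abs_nonneg _) hs
  have hZl : Tendsto (fun n => ∫ ω, X n T ω * Z ω ∂P) atTop (nhds (∫ ω, M T ω * Z ω ∂P)) := by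
    rw [tendsto_iff_dist_tendsto_zero]
    have h0 := (hl1 T hT).const_mul C
    rw [mul_zero] at h0
    refine squeeze_zero (fun n => dist_nonneg) (fun n => ?_) h0
    rw [Real.dist_eq, ← integral_sub (int_mulZ (hXi n T hT) hZm hZ) (int_mulZ (hMi T) hZm hZ),
      ← integral_const_mul]
    refine abs_integral_le_integral_abs.trans (integral_mono_ae ?_ ?_ ?_)
    · exact ((int_mulZ (hXi n T hT) hZm hZ).sub (int_mulZ (hMi T) hZm hZ)).abs
    · exact (((hXi n T hT).sub (hMi T)).abs).const_mul C
    · refine Eventually.of_forall fun ω => ?_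
      simp only
      rw [← sub_mul, abs_mul, mul_comm]
      exact mul_le_mul_of_nonneg_right (hZ ω) (abs_nonneg _)
  obtain ⟨hW, hJ⟩ := fatou_min hu ht hZm hZ (fun n => hX (φ n)) (hlim.comp hφ.tendsto_atTop)
    (M := M) (fun s _ => stronglyMeasurable_condExp.measurable) (fun s _ => hMi s)
    (fun r _ s _ hrs => condExp_condExp_of_le (ℱ.mono hrs) (ℱ.le s)) hae
    (hZl.comp hφ.tendsto_atTop)
  exact ⟨M, wadm_pos hu ht hZm hZ hW hI hJ, fun L hL => hJ.trans (hI L hL)⟩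

/-- Theorem 2.19: there exists a positive martingale attaining the
essential infimum of the dual problem, and it is unique up to a.s. equality. -/
theorem dual_problem_existence_uniqueness
    {m0 : MeasurableSpace Ω} (P : Measure Ω) [IsProbabilityMeasure P]
    (ℱ : Filtration ℕ m0) (T t : ℕ) (hT : 0 < T) (ht : t ≤ T)
    (u u' : ℕ → ℝ → ℝ) (hu : ∀ s, IsUtility (u s) (u' s))
    (Z : Ω → ℝ) (hZ : MeasBdd (ℱ T) Z) :
    ∃ M : ℕ → Ω → ℝ,
      (IsPosMart P ℱ t T M ∧
        ∀ s ∈ Finset.Icc t T, Integrable (fun ω => uStar (u s) (M s ω)) P) ∧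
      -- `M` attains the essential infimum of the dual problem:
      (∀ L : ℕ → Ω → ℝ,
        IsPosMart P ℱ t T L →
        (∀ s ∈ Finset.Icc t T, Integrable (fun ω => uStar (u s) (L s ω)) P) →
        dualObj P ℱ u t T Z M ≤ᵐ[P] dualObj P ℱ u t T Z L) ∧
      -- uniqueness up to a.s. equality:
      (∀ M' : ℕ → Ω → ℝ,
        IsPosMart P ℱ t T M' →
        (∀ s ∈ Finset.Icc t T, Integrable (fun ω => uStar (u s) (M' s ω)) P) →
        (∀ L : ℕ → Ω → ℝ,
          IsPosMart P ℱ t T L →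
          (∀ s ∈ Finset.Icc t T, Integrable (fun ω => uStar (u s) (L s ω)) P) →
          dualObj P ℱ u t T Z M' ≤ᵐ[P] dualObj P ℱ u t T Z L) →
        ∀ s ∈ Finset.Icc t T, M' s =ᵐ[P] M s) := by
  obtain ⟨hZm', C, hZ⟩ := hZ
  have hZm : Measurable Z := hZm'.mono (ℱ.le T) le_rfl
  obtain ⟨M, hM, hmin⟩ := exists_min (P := P) (ℱ := ℱ) hu ht hZm hZ
  refine ⟨M, hM, fun L h1 h2 => cond_min ht hZm hZ hM hmin ⟨h1, h2⟩, ?_⟩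
  intro M' h1 h2 h3 s hs
  have hM' : Adm P ℱ u t T M' := ⟨h1, h2⟩
  refine uniq hu ht hZm hZ hM hM' hmin ?_ hs
  obtain ⟨i1, e1⟩ := integral_dualObj ht hZm hZ hM
  obtain ⟨i2, e2⟩ := integral_dualObj ht hZm hZ hM'
  rw [← e1, ← e2]
  exact integral_mono_ae i2 i1 (h3 M hM.1 hM.2)
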